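/- Let G ↷ (X, μ) be a pmp action of a countable group and let (F_n)_{n∈ℕ} be an increasing sequence of G-invariant sub-σ-algebras with F = ⋁_{n∈ℕ} F_n. Then: (i) if P is a countable Borel partition with inf_n H_μ(P | F_n ∨ I_G) < ∞, then rh_{G,μ}(P | F) = inf_n rh_{G,μ}(P | F_n); and (ii) if inf_n rh_G(X, μ | F_n) < ∞, then rh_G(X, μ | F) = inf_n rh_G(X, μ | F_n). -/

import Mathlib

open MeasureTheory Set Function
open scoped ENNReal symmDiff

/-- A set in a measurable space is *analytic* if it is the image of a Borel subset of a
standard Borel space under a Borel (measurable) map. -/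
def IsAnalyticS {W : Type*} [MeasurableSpace W] (A : Set W) : Prop :=
  ∃ (Z : Type) (mZ : MeasurableSpace Z), @StandardBorelSpace Z mZ ∧
    ∃ (B : Set Z) (f : Z → W), MeasurableSet[mZ] B ∧ @Measurable Z W mZ _ f ∧ f '' B = A

/-- The smallest `G`-invariant sub-σ-algebra containing the collection `ξ`. -/
def sigmaG (G : Type*) {X : Type*} [Group G] [MulAction G X] (ξ : Set (Set X)) :
    MeasurableSpace X :=
  MeasurableSpace.generateFrom {B | ∃ (g : G), ∃ A ∈ ξ, B = (fun x => g • x) ⁻¹' A}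

/-- The σ-algebra of `G`-invariant measurable sets. -/
def invSigma (G X : Type*) [Group G] [MulAction G X] [MeasurableSpace X] :
    MeasurableSpace X :=
  MeasurableSpace.generateFrom {A | MeasurableSet A ∧ ∀ g : G, (fun x => g • x) ⁻¹' A = A}

/-- Conditional Shannon entropy `H_μ(α | m)` of a countable partition `α` given a
sub-σ-algebra `m`, valued in `[0,∞]`. -/
noncomputable def condEnt {X : Type*} (m : MeasurableSpace X) [mX : MeasurableSpace X]
    (μ : Measure X) {ι : Type*} (α : ι → Set X) : ℝ≥0∞ :=
  ∫⁻ x, ∑' i, ENNReal.ofReal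
    (Real.negMulLog ((μ[(α i).indicator (fun _ => (1 : ℝ)) | m]) x)) ∂μ

/-- Shannon entropy `H_μ(α)` of a countable partition. -/
noncomputable def shEnt {X : Type*} [MeasurableSpace X] (μ : Measure X)
    {ι : Type*} (α : ι → Set X) : ℝ≥0∞ :=
  ∑' i, ENNReal.ofReal (Real.negMulLog (μ (α i)).toReal)

/-- `α` is a countable Borel partition of `X` (indexed by `ℕ`, cells may be empty). -/
def IsPartition {X : Type*} [MeasurableSpace X] (α : ℕ → Set X) : Prop :=
  (∀ i, MeasurableSet (α i)) ∧ Pairwise (Function.onFun Disjoint α) ∧ (⋃ i, α i) = univ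

/-- Every set of `ξ` agrees with an `m`-measurable set modulo `μ`-null sets. -/
def SubsetMod {X : Type*} (m : MeasurableSpace X) [mX : MeasurableSpace X] (μ : Measure X)
    (ξ : Set (Set X)) : Prop :=
  ∀ A ∈ ξ, ∃ B, MeasurableSet[m] B ∧ μ (A ∆ B) = 0

/-- Outer Rokhlin entropy `rh_{G,μ}(ξ | F)`. -/
noncomputable def outerRokhlin (G : Type*) {X : Type*} (ξ : Set (Set X))
    (F : MeasurableSpace X) [Group G] [MulAction G X] [mX : MeasurableSpace X]
    (μ : Measure X) : ℝ≥0∞ :=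
  sInf { h | ∃ α : ℕ → Set X, IsPartition α ∧
      SubsetMod (sigmaG G (Set.range α) ⊔ F ⊔ invSigma G X) μ ξ ∧
      h = condEnt (F ⊔ invSigma G X) μ α }

/-- Rokhlin entropy `rh_G(X, μ | F)`. -/
noncomputable def rokhlin (G : Type*) {X : Type*} (F : MeasurableSpace X) [Group G]
    [MulAction G X] [mX : MeasurableSpace X] (μ : Measure X) : ℝ≥0∞ :=
  outerRokhlin G {A | MeasurableSet A} F μ

/-- Outer Rokhlin entropy `rh_{G,μ}(S | F)` of a sub-σ-algebra `S`. -/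
noncomputable def outerRokhlinAlg (G : Type*) {X : Type*} (S F : MeasurableSpace X) [Group G]
    [MulAction G X] [mX : MeasurableSpace X] (μ : Measure X) : ℝ≥0∞ :=
  outerRokhlin G {A | MeasurableSet[S] A} F μ

/-- The action of `G` on `(X, μ)` is probability-measure-preserving. -/
def IsPmp (G : Type*) {X : Type*} [Group G] [MulAction G X] [MeasurableSpace X]
    (μ : Measure X) : Prop :=
  ∀ g : G, MeasurePreserving (fun x => g • x) μ μ

/-- Aperiodicity: μ-almost-every `G`-orbit is infinite. -/
def Aperiodic (G : Type*) {X : Type*} [Group G] [MulAction G X] [MeasurableSpace X]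
    (μ : Measure X) : Prop :=
  ∀ᵐ x ∂μ, (MulAction.orbit G x).Infinite

/-- Ergodicity of a measure: every invariant Borel set is null or conull. -/
def IsErgodicInv (G : Type*) {X : Type*} [Group G] [MulAction G X] [MeasurableSpace X]
    (ν : Measure X) : Prop :=
  ∀ A : Set X, MeasurableSet A → (∀ g : G, (fun x => g • x) ⁻¹' A = A) → ν A = 0 ∨ ν A = 1

/-- `F` is a `G`-invariant σ-algebra. -/
def InvariantAlg (G : Type*) {X : Type*} (F : MeasurableSpace X) [Group G] [MulAction G X] :
    Prop :=
  ∀ (g : G) (A : Set X), MeasurableSet[F] A → MeasurableSet[F] ((fun x => g • x) ⁻¹' A)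

/-- `F` is countably generated. -/
def CountablyGen {X : Type*} (F : MeasurableSpace X) : Prop :=
  ∃ S : Set (Set X), S.Countable ∧ F = MeasurableSpace.generateFrom S

/-- `π` is an ergodic decomposition map for `μ`. -/
def IsErgDecomp (G : Type*) {X : Type*} [Group G] [MulAction G X] [MeasurableSpace X]
    (μ : Measure X) (π : X → Measure X) : Prop :=
  Measurable π ∧
  (∀ x, IsProbabilityMeasure (π x) ∧ IsPmp G (π x) ∧ IsErgodicInv G (π x)) ∧
  (∀ (g : G) (x : X), π (g • x) = π x) ∧
  (∀ ν : Measure X, IsProbabilityMeasure ν → IsPmp G ν → IsErgodicInv G ν →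
      ν {x | π x = ν} = 1) ∧
  (∀ B : Set X, MeasurableSet B → μ B = ∫⁻ x, π x B ∂μ)

open Filter Topology ProbabilityTheory

/-!
Passing to a larger algebra can only lower the outer Rokhlin entropy, so the content is the
inequality `≥`. Suppose a partition `α` generates `P` over `F = ⋁ F n`. Up to an exceptional set
`D` of small measure, `P` is already measurable with respect to finitely many cells of `α` together
with a single `F n`. Hence `P` is generated over `F n` by the truncation of `α` to finitely many
cells joined with the partition that equals `P` on `D` and is trivial off `D`. Conditional
entropies of a finite partition converge by Lévy's upward theorem, and the entropy of the second
partition is small because `P` has finite conditional entropy: this is dominated convergence for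
the disintegration of `μ`.

For the entropy of the action itself, a finite-entropy generator `P` over some `F k` may replace
the whole Borel σ-algebra for all `n ≥ k`.
-/

section NegMulLog

lemma negMulLog_add_self_le {x y : ℝ} (hx : 0 ≤ x) (hy : 0 ≤ y) (hxy : y = 0 → x = 0) :
    Real.negMulLog x + x ≤ x * -Real.log y + y := by
  rcases hx.eq_or_lt with rfl | hx
  · simpa using hy
  have hy : 0 < y := hy.lt_of_ne' fun h => hx.ne' (hxy h)
  have hlog : x * (Real.log y - Real.log x) ≤ x * (y / x - 1) := by
    rw [← Real.log_div hy.ne' hx.ne']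
    exact mul_le_mul_of_nonneg_left (Real.log_le_sub_one_of_pos (div_pos hy hx)) hx.le
  have hsub : x * (y / x - 1) = y - x := by field_simp
  rw [Real.negMulLog]
  linarith

lemma ofReal_negMulLog_le_one {x : ℝ} (hx : 0 ≤ x) : ENNReal.ofReal (Real.negMulLog x) ≤ 1 :=
  ENNReal.ofReal_le_one.2 <| (Real.negMulLog_le_one_sub_self hx).trans (by linarith)

end NegMulLog

section Partition

variable {X : Type*}

/-- The join `Q ∨ B` of two countable partitions, its cells enumerated through the pairing
function `ℕ × ℕ ≃ ℕ`. -/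
def joinPartition (Q B : ℕ → Set X) : ℕ → Set X :=
  fun n => Q n.unpair.1 ∩ B n.unpair.2

/-- The coarsening of the partition `α` obtained by merging all cells to which `c` gives the same
label. -/
def coarsenPartition (α : ℕ → Set X) (c : ℕ → ℕ) : ℕ → Set X :=
  fun k => ⋃ i : c ⁻¹' {k}, α i

/-- The partition that agrees with `P` on `D` and has the single cell `Dᶜ`, put at index `0`,
outside `D`. -/
def restrictPartition (D : Set X) (P : ℕ → Set X) : ℕ → Set X
  | 0 => Dᶜ
  | i + 1 => P i ∩ D

lemma joinPartition_pair (Q B : ℕ → Set X) (i j : ℕ) :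
    joinPartition Q B (Nat.pair i j) = Q i ∩ B j := by
  simp only [joinPartition, Nat.unpair_pair]

lemma coarsenPartition_min_of_lt (α : ℕ → Set X) {N k : ℕ} (hk : k < N) :
    coarsenPartition α (min · N) k = α k := by
  have hfiber : (min · N) ⁻¹' {k} = {k} := by
    ext i
    simp only [mem_preimage, mem_singleton_iff]
    omega
  rw [coarsenPartition, hfiber]
  exact iUnion_subtype .. |>.trans <| iUnion_iUnion_eq_left

lemma coarsenPartition_min_of_gt (α : ℕ → Set X) {N k : ℕ} (hk : N < k) :
    coarsenPartition α (min · N) k = ∅ := by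
  refine iUnion_eq_empty.2 fun ⟨i, hi⟩ => ?_
  simp only [mem_preimage, mem_singleton_iff] at hi
  omega

variable [MeasurableSpace X] {P Q B α : ℕ → Set X} {D : Set X}

lemma IsPartition.exists_mem (hP : IsPartition P) (x : X) : ∃ i, x ∈ P i :=
  mem_iUnion.1 (hP.2.2 ▸ mem_univ x)

lemma IsPartition.join (hQ : IsPartition Q) (hB : IsPartition B) :
    IsPartition (joinPartition Q B) := by
  refine ⟨fun k => (hQ.1 _).inter (hB.1 _), fun k l hkl => ?_, eq_univ_of_forall fun x => ?_⟩
  · by_cases hfst : k.unpair.1 = l.unpair.1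
    · have hsnd : k.unpair.2 ≠ l.unpair.2 := fun hsnd =>
        hkl (by rw [← Nat.pair_unpair k, ← Nat.pair_unpair l, hfst, hsnd])
      exact (hB.2.1 hsnd).mono inter_subset_right inter_subset_right
    · exact (hQ.2.1 hfst).mono inter_subset_left inter_subset_left
  · obtain ⟨i, hi⟩ := hQ.exists_mem x
    obtain ⟨j, hj⟩ := hB.exists_mem x
    exact mem_iUnion.2 ⟨Nat.pair i j, joinPartition_pair Q B i j ▸ ⟨hi, hj⟩⟩

lemma IsPartition.coarsen (hα : IsPartition α) (c : ℕ → ℕ) :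
    IsPartition (coarsenPartition α c) := by
  refine ⟨fun k => .iUnion fun i => hα.1 _, fun k l hkl => ?_, eq_univ_of_forall fun x => ?_⟩
  · refine disjoint_iUnion_left.2 fun i => disjoint_iUnion_right.2 fun j => hα.2.1 fun hij => ?_
    exact hkl (i.2.symm.trans ((congrArg c hij).trans j.2))
  · obtain ⟨i, hi⟩ := hα.exists_mem x
    exact mem_iUnion.2 ⟨c i, mem_iUnion.2 ⟨⟨i, rfl⟩, hi⟩⟩

lemma IsPartition.restrict (hP : IsPartition P) (hD : MeasurableSet D) :
    IsPartition (restrictPartition D P) := by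
  refine ⟨?_, ?_, eq_univ_of_forall fun x => ?_⟩
  · rintro (_ | i)
    exacts [hD.compl, (hP.1 i).inter hD]
  · rintro (_ | i) (_ | j) hij
    · exact absurd rfl hij
    · exact (disjoint_compl_left (a := D)).mono_right inter_subset_right
    · exact (disjoint_compl_right (a := D)).mono_left inter_subset_right
    · exact (hP.2.1 fun h => hij (by rw [h])).mono inter_subset_left inter_subset_left
  · by_cases hx : x ∈ D
    · obtain ⟨i, hi⟩ := hP.exists_mem x
      exact mem_iUnion.2 ⟨i + 1, hi, hx⟩
    · exact mem_iUnion.2 ⟨0, hx⟩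

lemma IsPartition.generateFrom_sup_le_generateFrom_join (hQ : IsPartition Q)
    (hB : IsPartition B) :
    MeasurableSpace.generateFrom (range Q) ⊔ MeasurableSpace.generateFrom (range B) ≤
      MeasurableSpace.generateFrom (range (joinPartition Q B)) := by
  have hcell (i j) : MeasurableSet[.generateFrom (range (joinPartition Q B))] (Q i ∩ B j) :=
    MeasurableSpace.measurableSet_generateFrom ⟨Nat.pair i j, joinPartition_pair Q B i j⟩
  refine sup_le (MeasurableSpace.generateFrom_le ?_) (MeasurableSpace.generateFrom_le ?_)
  · rintro _ ⟨i, rfl⟩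
    rw [← inter_univ (Q i), ← hB.2.2, inter_iUnion]
    exact .iUnion fun j => hcell i j
  · rintro _ ⟨j, rfl⟩
    rw [← univ_inter (B j), ← hQ.2.2, iUnion_inter]
    exact .iUnion fun i => hcell i j

lemma IsPartition.tsum_measure_inter (hP : IsPartition P) (ν : Measure X) {A : Set X}
    (hA : MeasurableSet A) : ∑' i, ν (A ∩ P i) = ν A := by
  rw [← measure_iUnion (fun i j hij => (hP.2.1 hij).mono inter_subset_right inter_subset_right)
    (fun i => hA.inter (hP.1 i)), ← inter_iUnion, hP.2.2, inter_univ]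

lemma IsPartition.tsum_measure (hP : IsPartition P) (ν : Measure X) :
    ∑' i, ν (P i) = ν univ := by
  simpa only [univ_inter] using hP.tsum_measure_inter ν MeasurableSet.univ

end Partition

section ShannonEntropy

variable {X : Type*} [MeasurableSpace X]

/-- The contribution `-ν(A) log ν(A)` of a cell `A` to the Shannon entropy of a partition. -/
noncomputable def cellEnt (ν : Measure X) (A : Set X) : ℝ≥0∞ :=
  ENNReal.ofReal (Real.negMulLog (ν.real A))

/-- The information content `-log ν(A)` of a set, with value `0` on null sets because
`Real.log 0 = 0`. -/
noncomputable def information (ν : Measure X) (A : Set X) : ℝ≥0∞ :=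
  ENNReal.ofReal (-Real.log (ν.real A))

lemma shEnt_restrict (ν : Measure X) (D : Set X) (P : ℕ → Set X) :
    shEnt ν (restrictPartition D P) = cellEnt ν Dᶜ + ∑' i, cellEnt ν (P i ∩ D) :=
  tsum_eq_zero_add' ENNReal.summable

section FiniteMeasure

variable (ν : Measure X) [IsFiniteMeasure ν] {A B : Set X} {α : ℕ → Set X}

lemma measure_mul_information_eq_ofReal (A B : Set X) :
    ν A * information ν B = ENNReal.ofReal (ν.real A * -Real.log (ν.real B)) := by
  rw [information, ENNReal.ofReal_mul measureReal_nonneg, ofReal_measureReal]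

lemma measure_mul_information_self (A : Set X) : ν A * information ν A = cellEnt ν A := by
  rw [measure_mul_information_eq_ofReal, cellEnt, Real.negMulLog, neg_mul_comm]

lemma measure_mul_information_le_cellEnt (hAB : A ⊆ B) :
    ν A * information ν B ≤ cellEnt ν A := by
  rw [← measure_mul_information_self, measure_mul_information_eq_ofReal,
    measure_mul_information_eq_ofReal]
  refine ENNReal.ofReal_le_ofReal ?_
  rcases (measureReal_nonneg (μ := ν) (s := A)).eq_or_lt with hA | hA
  · rw [← hA, zero_mul, zero_mul]
  · exact mul_le_mul_of_nonneg_left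
      (neg_le_neg (Real.log_le_log hA (measureReal_mono hAB))) hA.le

lemma tendsto_cellEnt {D : ℕ → Set X} (hD : Tendsto (fun n => ν (D n)) atTop (𝓝 (ν A))) :
    Tendsto (fun n => cellEnt ν (D n)) atTop (𝓝 (cellEnt ν A)) :=
  ENNReal.tendsto_ofReal <| (Real.continuous_negMulLog.tendsto _).comp <|
    (ENNReal.tendsto_toReal (measure_ne_top ν A)).comp hD

lemma shEnt_coarsen_le (hα : IsPartition α) (c : ℕ → ℕ) :
    shEnt ν (coarsenPartition α c) ≤ shEnt ν α := by
  have hmerge (k : ℕ) : cellEnt ν (coarsenPartition α c k) ≤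
      ∑' i : c ⁻¹' {k}, cellEnt ν (α i) := by
    have hmeasure : ν (coarsenPartition α c k) = ∑' i : c ⁻¹' {k}, ν (α i) :=
      measure_iUnion (fun i j hij => hα.2.1 (Subtype.coe_ne_coe.2 hij)) fun i => hα.1 i
    rw [← measure_mul_information_self, hmeasure, ← ENNReal.tsum_mul_right]
    exact ENNReal.tsum_le_tsum fun i => measure_mul_information_le_cellEnt ν <|
      subset_iUnion (fun i : c ⁻¹' {k} => α i) i
  calc shEnt ν (coarsenPartition α c) ≤ ∑' k, ∑' i : c ⁻¹' {k}, cellEnt ν (α i) :=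
        ENNReal.tsum_le_tsum hmerge
    _ = ∑' p : Σ k, c ⁻¹' {k}, cellEnt ν (α p.2) :=
        (ENNReal.tsum_sigma' fun p : Σ k, c ⁻¹' {k} => cellEnt ν (α p.2)).symm
    _ = shEnt ν α := (Equiv.sigmaFiberEquiv c).tsum_eq fun i => cellEnt ν (α i)

end FiniteMeasure

variable (ν : Measure X) [IsProbabilityMeasure ν] {A B : Set X} {P Q : ℕ → Set X}

lemma measureReal_mul_neg_log_nonneg (A B : Set X) : 0 ≤ ν.real A * -Real.log (ν.real B) :=
  mul_nonneg measureReal_nonneg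
    (neg_nonneg.2 (Real.log_nonpos measureReal_nonneg measureReal_le_one))

lemma cellEnt_add_measure_eq_ofReal (A : Set X) :
    cellEnt ν A + ν A = ENNReal.ofReal (Real.negMulLog (ν.real A) + ν.real A) := by
  rw [cellEnt, ENNReal.ofReal_add (Real.negMulLog_nonneg measureReal_nonneg measureReal_le_one)
    measureReal_nonneg, ofReal_measureReal]

lemma cellEnt_le_cellEnt_add_measure (hAB : A ⊆ B) : cellEnt ν A ≤ cellEnt ν B + ν B := by
  rw [cellEnt_add_measure_eq_ofReal, cellEnt]
  refine ENNReal.ofReal_le_ofReal ?_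
  have hle : ν.real A ≤ ν.real B := measureReal_mono hAB
  have hA : 0 ≤ ν.real A := measureReal_nonneg
  calc Real.negMulLog (ν.real A)
      ≤ ν.real A * -Real.log (ν.real B) + ν.real B := by
        linarith [negMulLog_add_self_le hA (hA.trans hle) fun h => le_antisymm (h ▸ hle) hA]
    _ ≤ ν.real B * -Real.log (ν.real B) + ν.real B := by
        gcongr
        exact neg_nonneg.2 (Real.log_nonpos measureReal_nonneg measureReal_le_one)
    _ = Real.negMulLog (ν.real B) + ν.real B := by rw [Real.negMulLog, neg_mul_comm]

lemma cellEnt_inter_add_measure_le (A B : Set X) :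
    cellEnt ν (A ∩ B) + ν (A ∩ B) ≤
      ν (A ∩ B) * information ν A + ν (A ∩ B) * information ν B + ν A * ν B := by
  have hprod : ν A * ν B = ENNReal.ofReal (ν.real A * ν.real B) := by
    rw [ENNReal.ofReal_mul measureReal_nonneg, ofReal_measureReal, ofReal_measureReal]
  rw [cellEnt_add_measure_eq_ofReal, measure_mul_information_eq_ofReal,
    measure_mul_information_eq_ofReal, hprod, ← ENNReal.ofReal_add
      (measureReal_mul_neg_log_nonneg ν _ _) (measureReal_mul_neg_log_nonneg ν _ _),
    ← ENNReal.ofReal_add (add_nonneg (measureReal_mul_neg_log_nonneg ν _ _)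
      (measureReal_mul_neg_log_nonneg ν _ _)) (mul_nonneg measureReal_nonneg measureReal_nonneg)]
  refine ENNReal.ofReal_le_ofReal ?_
  rcases (measureReal_nonneg (μ := ν) (s := A ∩ B)).eq_or_lt with hAB | hAB
  · simp only [← hAB, Real.negMulLog_zero, zero_mul, zero_add]
    positivity
  have hA : 0 < ν.real A := hAB.trans_le (measureReal_mono inter_subset_left)
  have hB : 0 < ν.real B := hAB.trans_le (measureReal_mono inter_subset_right)
  have hgibbs := negMulLog_add_self_le hAB.le (mul_pos hA hB).le
    fun h => absurd h (mul_pos hA hB).ne'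
  rw [Real.log_mul hA.ne' hB.ne'] at hgibbs
  linarith

lemma shEnt_join_le (hP : IsPartition P) (hQ : IsPartition Q) :
    shEnt ν (joinPartition P Q) ≤ shEnt ν P + shEnt ν Q := by
  have hjoin : shEnt ν (joinPartition P Q) = ∑' i, ∑' j, cellEnt ν (P i ∩ Q j) := by
    rw [← ENNReal.tsum_prod, ← Nat.pairEquiv.symm.tsum_eq]
    rfl
  have hrow (i) : ∑' j, ν (P i ∩ Q j) = ν (P i) := hQ.tsum_measure_inter ν (hP.1 i)
  have hcol (j) : ∑' i, ν (P i ∩ Q j) = ν (Q j) := by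
    simpa only [inter_comm] using hP.tsum_measure_inter ν (hQ.1 j)
  have hP_one : ∑' i, ν (P i) = 1 := (hP.tsum_measure ν).trans measure_univ
  have hQ_one : ∑' j, ν (Q j) = 1 := (hQ.tsum_measure ν).trans measure_univ
  have hinfoP : ∑' i, ∑' j, ν (P i ∩ Q j) * information ν (P i) = shEnt ν P := by
    simp only [ENNReal.tsum_mul_right, hrow, measure_mul_information_self]
    rfl
  have hinfoQ : ∑' i, ∑' j, ν (P i ∩ Q j) * information ν (Q j) = shEnt ν Q := by
    rw [ENNReal.tsum_comm]
    simp only [ENNReal.tsum_mul_right, hcol, measure_mul_information_self]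
    rfl
  have hsum : ∑' i, ∑' j, (cellEnt ν (P i ∩ Q j) + ν (P i ∩ Q j)) ≤
      ∑' i, ∑' j, (ν (P i ∩ Q j) * information ν (P i) + ν (P i ∩ Q j) * information ν (Q j) +
        ν (P i) * ν (Q j)) :=
    ENNReal.tsum_le_tsum fun i => ENNReal.tsum_le_tsum fun j =>
      cellEnt_inter_add_measure_le ν (P i) (Q j)
  simp only [ENNReal.tsum_add, ENNReal.tsum_mul_left, hinfoP, hinfoQ, hrow, hP_one, hQ_one,
    mul_one, ← hjoin] at hsum
  exact (ENNReal.add_le_add_iff_right ENNReal.one_ne_top).1 hsum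

lemma tsum_cellEnt_add_measure (hP : IsPartition P) :
    ∑' i, (cellEnt ν (P i) + ν (P i)) = shEnt ν P + 1 := by
  rw [ENNReal.tsum_add, hP.tsum_measure, measure_univ]
  rfl

lemma shEnt_restrict_le (D : Set X) (hP : IsPartition P) :
    shEnt ν (restrictPartition D P) ≤ shEnt ν P + 2 :=
  calc shEnt ν (restrictPartition D P)
      = cellEnt ν Dᶜ + ∑' i, cellEnt ν (P i ∩ D) := shEnt_restrict ν D P
    _ ≤ 1 + ∑' i, (cellEnt ν (P i) + ν (P i)) := by
        gcongr with i
        · exact ofReal_negMulLog_le_one measureReal_nonneg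
        · exact cellEnt_le_cellEnt_add_measure ν inter_subset_left
    _ = shEnt ν P + 2 := by
        rw [tsum_cellEnt_add_measure ν hP, add_comm, add_assoc, one_add_one_eq_two]

lemma tendsto_shEnt_restrict {D : ℕ → Set X} (hD : ∀ n, MeasurableSet (D n))
    (hD_zero : Tendsto (fun n => ν (D n)) atTop (𝓝 0)) (hP : IsPartition P)
    (hfin : shEnt ν P ≠ ⊤) :
    Tendsto (fun n => shEnt ν (restrictPartition (D n) P)) atTop (𝓝 0) := by
  have hcompl : Tendsto (fun n => cellEnt ν (D n)ᶜ) atTop (𝓝 0) := by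
    have hmeasure : Tendsto (fun n => ν (D n)ᶜ) atTop (𝓝 (ν univ)) := by
      simpa only [prob_compl_eq_one_sub (hD _), tsub_zero, measure_univ] using
        ENNReal.Tendsto.sub tendsto_const_nhds hD_zero (.inl ENNReal.one_ne_top)
    simpa [cellEnt] using tendsto_cellEnt ν hmeasure
  have hcell (i) : Tendsto (fun n => cellEnt ν (P i ∩ D n)) atTop (𝓝 0) := by
    have hmeasure : Tendsto (fun n => ν (P i ∩ D n)) atTop (𝓝 (ν ∅)) := by
      rw [measure_empty]
      exact tendsto_of_tendsto_of_tendsto_of_le_of_le tendsto_const_nhds hD_zero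
        (fun _ => zero_le) fun n => measure_mono inter_subset_right
    simpa [cellEnt] using tendsto_cellEnt ν hmeasure
  have hsum : Tendsto (fun n => ∑' i, cellEnt ν (P i ∩ D n)) atTop (𝓝 0) := by
    have hbound : ∫⁻ i, (cellEnt ν (P i) + ν (P i)) ∂Measure.count ≠ ⊤ := by
      rw [lintegral_count, tsum_cellEnt_add_measure ν hP]
      exact ENNReal.add_ne_top.2 ⟨hfin, ENNReal.one_ne_top⟩
    simpa only [lintegral_count, tsum_zero] using tendsto_lintegral_of_dominated_convergence
      (μ := Measure.count) _ (fun n => measurable_of_countable _)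
      (fun n => .of_forall fun i =>
        cellEnt_le_cellEnt_add_measure ν (inter_subset_left (s := P i) (t := D n)))
      hbound (.of_forall hcell)
  simpa only [shEnt_restrict, add_zero] using hcompl.add hsum

end ShannonEntropy

section ConditionalEntropy

variable {X : Type*} {m m' mX : MeasurableSpace X}

/-- The contribution of a cell `A` to the conditional entropy `condEnt m μ α` of a partition:
the integral of `-f log f`, where `f` is the conditional probability of `A` given `m`. -/
noncomputable def condCellEnt (m : MeasurableSpace X) {_ : MeasurableSpace X} (μ : Measure X)
    (A : Set X) : ℝ≥0∞ :=
  ∫⁻ x, ENNReal.ofReal (Real.negMulLog (μ[A.indicator (fun _ => (1 : ℝ)) | m] x)) ∂μ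

lemma measurable_ofReal_negMulLog_condExp (hm : m ≤ mX) (μ : Measure X) (f : X → ℝ) :
    Measurable fun x => ENNReal.ofReal (Real.negMulLog (μ[f | m] x)) :=
  (Real.continuous_negMulLog.measurable.comp
    (stronglyMeasurable_condExp.measurable.mono hm le_rfl)).ennreal_ofReal

lemma condEnt_eq_tsum_condCellEnt (hm : m ≤ mX) (μ : Measure X) (α : ℕ → Set X) :
    condEnt m μ α = ∑' i, condCellEnt m μ (α i) :=
  lintegral_tsum fun _ => (measurable_ofReal_negMulLog_condExp hm μ _).aemeasurable

lemma condCellEnt_empty (μ : Measure X) : condCellEnt m μ ∅ = 0 := by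
  have hzero : μ[(∅ : Set X).indicator (fun _ => (1 : ℝ)) | m] = 0 := by
    rw [indicator_empty]
    exact condExp_zero
  simp only [condCellEnt, hzero, Pi.zero_apply, Real.negMulLog_zero, ENNReal.ofReal_zero,
    lintegral_zero]

variable {μ : Measure X} [IsFiniteMeasure μ]

lemma condExp_indicator_mem_Icc (hm : m ≤ mX) {A : Set X} (hA : MeasurableSet A) :
    ∀ᵐ x ∂μ, μ[A.indicator (fun _ => (1 : ℝ)) | m] x ∈ Icc (0 : ℝ) 1 :=
  (convex_Icc 0 1).condExp_mem hm ((integrable_const 1).indicator hA) isClosed_Icc <|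
    .of_forall fun x => ⟨indicator_nonneg (fun _ _ => zero_le_one) x,
      indicator_le_self' (fun _ _ => zero_le_one) x⟩

lemma integrable_negMulLog_comp {u : X → ℝ} (hu : AEStronglyMeasurable u μ)
    (hu_mem : ∀ᵐ x ∂μ, u x ∈ Icc (0 : ℝ) 1) : Integrable (Real.negMulLog ∘ u) μ := by
  refine .of_bound (Real.continuous_negMulLog.comp_aestronglyMeasurable hu) 1 ?_
  filter_upwards [hu_mem] with x ⟨hx_nonneg, hx_le⟩
  rw [comp_apply, Real.norm_of_nonneg (Real.negMulLog_nonneg hx_nonneg hx_le)]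
  linarith [Real.negMulLog_le_one_sub_self hx_nonneg]

lemma condCellEnt_anti (hmm : m ≤ m') (hm' : m' ≤ mX) {A : Set X} (hA : MeasurableSet A) :
    condCellEnt m' μ A ≤ condCellEnt m μ A := by
  have hm : m ≤ mX := hmm.trans hm'
  set f := μ[A.indicator (fun _ => (1 : ℝ)) | m']
  set g := μ[A.indicator (fun _ => (1 : ℝ)) | m]
  have hf_mem : ∀ᵐ x ∂μ, f x ∈ Icc (0 : ℝ) 1 := condExp_indicator_mem_Icc hm' hA
  have hg_mem : ∀ᵐ x ∂μ, g x ∈ Icc (0 : ℝ) 1 := condExp_indicator_mem_Icc hm hA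
  have hφf : Integrable (Real.negMulLog ∘ f) μ :=
    integrable_negMulLog_comp integrable_condExp.1 hf_mem
  have hφg : Integrable (Real.negMulLog ∘ g) μ :=
    integrable_negMulLog_comp integrable_condExp.1 hg_mem
  have hjensen : μ[Real.negMulLog ∘ f | m] ≤ᵐ[μ] Real.negMulLog ∘ μ[f | m] :=
    Real.concaveOn_negMulLog.condExp_map_le hm
      Real.continuous_negMulLog.continuousOn.upperSemicontinuousOn
      (hf_mem.mono fun _ hx => hx.1) isClosed_Ici integrable_condExp hφf
  have htower : μ[f | m] =ᵐ[μ] g := condExp_condExp_of_le hmm hm'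
  have hintegral : ∫ x, Real.negMulLog (f x) ∂μ ≤ ∫ x, Real.negMulLog (g x) ∂μ :=
    calc ∫ x, Real.negMulLog (f x) ∂μ = ∫ x, (μ[Real.negMulLog ∘ f | m]) x ∂μ :=
          (integral_condExp hm).symm
      _ ≤ ∫ x, Real.negMulLog (g x) ∂μ :=
          integral_mono_ae integrable_condExp hφg <|
            hjensen.trans (htower.fun_comp Real.negMulLog).le
  calc condCellEnt m' μ A = ENNReal.ofReal (∫ x, Real.negMulLog (f x) ∂μ) :=
        (ofReal_integral_eq_lintegral_ofReal hφf
          (hf_mem.mono fun _ hx => Real.negMulLog_nonneg hx.1 hx.2)).symm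
    _ ≤ ENNReal.ofReal (∫ x, Real.negMulLog (g x) ∂μ) := ENNReal.ofReal_le_ofReal hintegral
    _ = condCellEnt m μ A :=
        ofReal_integral_eq_lintegral_ofReal hφg
          (hg_mem.mono fun _ hx => Real.negMulLog_nonneg hx.1 hx.2)

lemma condEnt_anti (hmm : m ≤ m') (hm' : m' ≤ mX) {α : ℕ → Set X}
    (hα : ∀ i, MeasurableSet (α i)) : condEnt m' μ α ≤ condEnt m μ α := by
  rw [condEnt_eq_tsum_condCellEnt hm', condEnt_eq_tsum_condCellEnt (hmm.trans hm')]
  exact ENNReal.tsum_le_tsum fun i => condCellEnt_anti hmm hm' (hα i)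

lemma tendsto_condCellEnt (ℱ : Filtration ℕ mX) (A : Set X) :
    Tendsto (fun n => condCellEnt (ℱ n) μ A) atTop (𝓝 (condCellEnt (⨆ n, ℱ n) μ A)) := by
  refine tendsto_lintegral_of_dominated_convergence (fun _ => 1)
    (fun n => measurable_ofReal_negMulLog_condExp (ℱ.le n) μ _) (fun n => ?_) (by simp) ?_
  · have hnonneg : 0 ≤ᵐ[μ] μ[A.indicator (fun _ => (1 : ℝ)) | ℱ n] :=
      condExp_nonneg <| .of_forall <| indicator_nonneg fun _ _ => zero_le_one
    filter_upwards [hnonneg] with x hx using ofReal_negMulLog_le_one hx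
  · filter_upwards [tendsto_ae_condExp (ℱ := ℱ) (μ := μ) (A.indicator fun _ => (1 : ℝ))] with x hx
    exact ENNReal.tendsto_ofReal ((Real.continuous_negMulLog.tendsto _).comp hx)

lemma tendsto_condEnt_of_eventually_empty (ℱ : Filtration ℕ mX) {α : ℕ → Set X} {N : ℕ}
    (hα : ∀ i, N < i → α i = ∅) :
    Tendsto (fun n => condEnt (ℱ n) μ α) atTop (𝓝 (condEnt (⨆ n, ℱ n) μ α)) := by
  have hfinite {m : MeasurableSpace X} (hm : m ≤ mX) :
      condEnt (mX := mX) m μ α = ∑ i ∈ Finset.range (N + 1), condCellEnt m μ (α i) := by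
    rw [condEnt_eq_tsum_condCellEnt hm]
    refine tsum_eq_sum fun i hi => ?_
    rw [hα i (by simpa using hi), condCellEnt_empty]
  simp only [hfinite (ℱ.le _), hfinite (iSup_le ℱ.le)]
  exact tendsto_finsetSum _ fun i _ => tendsto_condCellEnt ℱ (α i)

end ConditionalEntropy

section Disintegration

variable {X : Type*} {m : MeasurableSpace X} [mX : MeasurableSpace X] [StandardBorelSpace X]
  {μ : Measure X} [IsFiniteMeasure μ] {P Q α : ℕ → Set X}

lemma lintegral_condExpKernel (hm : m ≤ mX) {A : Set X} (hA : MeasurableSet A) :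
    ∫⁻ x, condExpKernel μ m x A ∂μ = μ A := by
  conv_rhs => rw [← condExpKernel_comp_trim (μ := μ) hm]
  rw [Measure.bind_apply hA (Kernel.aemeasurable _),
    lintegral_trim hm (measurable_condExpKernel hA)]

lemma measurable_shEnt_condExpKernel (hm : m ≤ mX) (hα : ∀ i, MeasurableSet (α i)) :
    Measurable fun x => shEnt (condExpKernel μ m x) α :=
  .tsum fun i => (Real.continuous_negMulLog.measurable.comp
    ((measurable_condExpKernel (hα i)).mono hm le_rfl).ennreal_toReal).ennreal_ofReal

lemma condEnt_eq_lintegral_shEnt (hm : m ≤ mX) (hα : ∀ i, MeasurableSet (α i)) :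
    condEnt m μ α = ∫⁻ x, shEnt (condExpKernel μ m x) α ∂μ := by
  have hkernel : ∀ᵐ x ∂μ, ∀ i, (condExpKernel μ m x).real (α i) =
      μ[(α i).indicator (fun _ => (1 : ℝ)) | m] x :=
    ae_all_iff.2 fun i => condExpKernel_ae_eq_condExp hm (hα i)
  refine lintegral_congr_ae ?_
  filter_upwards [hkernel] with x hx
  simp only [shEnt, ← hx, measureReal_def]

lemma condEnt_join_le (hm : m ≤ mX) (hP : IsPartition P) (hQ : IsPartition Q) :
    condEnt m μ (joinPartition P Q) ≤ condEnt m μ P + condEnt m μ Q := by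
  rw [condEnt_eq_lintegral_shEnt hm (hP.join hQ).1, condEnt_eq_lintegral_shEnt hm hP.1,
    condEnt_eq_lintegral_shEnt hm hQ.1,
    ← lintegral_add_left (measurable_shEnt_condExpKernel hm hP.1)]
  exact lintegral_mono fun x => shEnt_join_le _ hP hQ

lemma condEnt_coarsen_le (hm : m ≤ mX) (hα : IsPartition α) (c : ℕ → ℕ) :
    condEnt m μ (coarsenPartition α c) ≤ condEnt m μ α := by
  rw [condEnt_eq_lintegral_shEnt hm (hα.coarsen c).1, condEnt_eq_lintegral_shEnt hm hα.1]
  exact lintegral_mono fun x => shEnt_coarsen_le _ hα c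

lemma eventually_condEnt_coarsen_lt (ℱ : Filtration ℕ mX) (hα : IsPartition α)
    (hfin : condEnt (⨆ n, ℱ n) μ α ≠ ⊤) (N : ℕ) {ε : ℝ≥0∞} (hε : ε ≠ 0) :
    ∀ᶠ n in atTop,
      condEnt (ℱ n) μ (coarsenPartition α (min · N)) < condEnt (⨆ n, ℱ n) μ α + ε :=
  (tendsto_condEnt_of_eventually_empty ℱ fun _ => coarsenPartition_min_of_gt α).eventually_lt_const
    ((condEnt_coarsen_le (iSup_le ℱ.le) hα _).trans_lt (ENNReal.lt_add_right hfin hε))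

lemma ae_tendsto_condExpKernel_zero (hm : m ≤ mX) {D : ℕ → Set X}
    (hD : ∀ n, MeasurableSet (D n)) (hsum : ∑' n, μ (D n) ≠ ⊤) :
    ∀ᵐ x ∂μ, Tendsto (fun n => condExpKernel μ m x (D n)) atTop (𝓝 0) := by
  have hmeas (n) : Measurable fun x => condExpKernel μ m x (D n) :=
    (measurable_condExpKernel (hD n)).mono hm le_rfl
  have hfin : ∫⁻ x, ∑' n, condExpKernel μ m x (D n) ∂μ ≠ ⊤ := by
    rw [lintegral_tsum fun n => (hmeas n).aemeasurable]
    simpa only [lintegral_condExpKernel hm (hD _)] using hsum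
  filter_upwards [ae_lt_top (.tsum hmeas) hfin] with x hx
  exact ENNReal.tendsto_atTop_zero_of_tsum_ne_top hx.ne

lemma tendsto_condEnt_restrict (hm : m ≤ mX) (hP : IsPartition P) (hfin : condEnt m μ P ≠ ⊤)
    {D : ℕ → Set X} (hD : ∀ n, MeasurableSet (D n)) (hsum : ∑' n, μ (D n) ≠ ⊤) :
    Tendsto (fun n => condEnt m μ (restrictPartition (D n) P)) atTop (𝓝 0) := by
  have hmeas : Measurable fun x => shEnt (condExpKernel μ m x) P :=
    measurable_shEnt_condExpKernel hm hP.1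
  rw [condEnt_eq_lintegral_shEnt hm hP.1] at hfin
  have hbound : ∫⁻ x, (shEnt (condExpKernel μ m x) P + 2) ∂μ ≠ ⊤ := by
    rw [lintegral_add_left hmeas, lintegral_const]
    exact ENNReal.add_ne_top.2
      ⟨hfin, ENNReal.mul_ne_top ENNReal.ofNat_ne_top (measure_ne_top μ univ)⟩
  simp only [condEnt_eq_lintegral_shEnt hm (hP.restrict (hD _)).1]
  rw [← lintegral_zero (μ := μ)]
  refine tendsto_lintegral_of_dominated_convergence _
    (fun n => measurable_shEnt_condExpKernel hm (hP.restrict (hD n)).1)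
    (fun n => .of_forall fun x => shEnt_restrict_le _ (D n) hP) hbound ?_
  filter_upwards [ae_lt_top hmeas hfin, ae_tendsto_condExpKernel_zero hm hD hsum] with x hx hDx
  exact tendsto_shEnt_restrict _ hD hDx hP hx.ne

end Disintegration

section Approximation

variable {X : Type*} {m m' mX : MeasurableSpace X} {μ : Measure X} {ξ : Set (Set X)} {A : Set X}
  {P : ℕ → Set X} {ι : Type*} {K : ι → MeasurableSpace X}

lemma subsetMod_iff : SubsetMod m μ ξ ↔
    ∀ A ∈ ξ, MeasurableSet[eventuallyMeasurableSpace m (ae μ)] A := by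
  simp only [SubsetMod, measure_symmDiff_eq_zero_iff]
  rfl

lemma SubsetMod.trans (h : SubsetMod m μ ξ) (hm : m ≤ eventuallyMeasurableSpace m' (ae μ)) :
    SubsetMod m' μ ξ :=
  subsetMod_iff.2 fun A hA => by
    obtain ⟨B, hB, hAB⟩ := subsetMod_iff.1 h A hA
    exact EventuallyMeasurableSet.congr (hm B hB) hAB

lemma SubsetMod.mono (h : SubsetMod m μ ξ) (hm : m ≤ m') : SubsetMod m' μ ξ :=
  h.trans (hm.trans le_eventuallyMeasurableSpace)

lemma isSetAlgebra_setOf_exists_measurableSet [Nonempty ι] (hK : Directed (· ≤ ·) K) :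
    IsSetAlgebra {A | ∃ n, MeasurableSet[K n] A} where
  empty_mem := ⟨Classical.arbitrary ι, @MeasurableSet.empty _ (K _)⟩
  compl_mem := fun _ ⟨n, hn⟩ => ⟨n, hn.compl⟩
  union_mem := fun _ _ ⟨n, hn⟩ ⟨k, hk⟩ =>
    let ⟨l, hnl, hkl⟩ := hK n k
    ⟨l, (hnl _ hn).union (hkl _ hk)⟩

lemma exists_measurableSet_measure_symmDiff_lt [IsFiniteMeasure μ] [Nonempty ι]
    (hK : Directed (· ≤ ·) K) (hle : ∀ n, K n ≤ mX) (hA : MeasurableSet[⨆ n, K n] A)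
    {ε : ℝ≥0∞} (hε : ε ≠ 0) : ∃ n C, MeasurableSet[K n] C ∧ μ (A ∆ C) < ε := by
  obtain ⟨r, hr, hrε⟩ := ENNReal.lt_iff_exists_nnreal_btwn.1 (pos_iff_ne_zero.2 hε)
  have hdense := @Measure.MeasureDense.of_generateFrom_isSetAlgebra_finite X (⨆ n, K n)
    (μ.trim (iSup_le hle)) _ _ (isSetAlgebra_setOf_exists_measurableSet hK)
    (MeasurableSpace.measurableSpace_iSup_eq K)
  obtain ⟨C, ⟨n, hC⟩, hAC⟩ := @Measure.MeasureDense.approx X (⨆ n, K n) _ _ hdense A hA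
    (measure_ne_top _ _) r (by exact_mod_cast hr)
  rw [trim_measurableSet_eq _ (MeasurableSet.symmDiff hA (le_iSup K n C hC)),
    ENNReal.ofReal_coe_nnreal] at hAC
  exact ⟨n, C, hC, hAC.trans hrε⟩

lemma SubsetMod.exists_measure_symmDiff_lt [IsFiniteMeasure μ] [Nonempty ι]
    (hK : Directed (· ≤ ·) K) (hle : ∀ n, K n ≤ mX) (h : SubsetMod (⨆ n, K n) μ ξ)
    (hA : A ∈ ξ) {ε : ℝ≥0∞} (hε : ε ≠ 0) : ∃ n C, MeasurableSet[K n] C ∧ μ (A ∆ C) < ε := by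
  obtain ⟨B, hB, hAB⟩ := h A hA
  obtain ⟨n, C, hC, hBC⟩ := exists_measurableSet_measure_symmDiff_lt (μ := μ) hK hle hB hε
  refine ⟨n, C, hC, (measure_symmDiff_le A B C).trans_lt ?_⟩
  rwa [hAB, zero_add]

lemma diff_eq_diff_of_symmDiff_subset {A C D : Set X} (h : A ∆ C ⊆ D) : A \ D = C \ D := by
  grind

lemma IsPartition.exists_diff_eq_diff [IsFiniteMeasure μ] [Nonempty ι] (hP : IsPartition P)
    (hK : Directed (· ≤ ·) K) (hle : ∀ n, K n ≤ mX)
    (hgen : SubsetMod (⨆ n, K n) μ (range P)) {δ : ℝ≥0∞} (hδ : δ ≠ 0) :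
    ∃ n D, MeasurableSet D ∧ μ D < δ ∧ ∀ i, ∃ C, MeasurableSet[K n] C ∧ P i \ D = C \ D := by
  classical
  have hδ_half : δ / 2 ≠ 0 := (ENNReal.half_pos hδ).ne'
  obtain ⟨e, he, he_sum⟩ := ENNReal.exists_pos_sum_of_countable' hδ_half ℕ
  choose k C hC hPC using fun i =>
    hgen.exists_measure_symmDiff_lt hK hle (mem_range_self i) (he i).ne'
  obtain ⟨s, hs⟩ : ∃ s : Finset ℕ, ∑' i : {i // i ∉ s}, μ (P i) < δ / 2 :=
    (ENNReal.tendsto_tsum_compl_atTop_zero (hP.tsum_measure μ ▸ measure_ne_top μ univ)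
      |>.eventually_lt_const hδ_half.bot_lt).exists
  obtain ⟨n, hn⟩ := hK.finset_le (s.image k)
  let C' (i : ℕ) : Set X := if i ∈ s then C i else ∅
  have hC' (i) : MeasurableSet[K n] (C' i) := by
    by_cases hi : i ∈ s
    · simpa only [C', if_pos hi] using hn _ (Finset.mem_image_of_mem k hi) _ (hC i)
    · simpa only [C', if_neg hi] using @MeasurableSet.empty _ (K n)
  have hPC' (i) : μ (P i ∆ C' i) ≤ e i + {i | i ∉ s}.indicator (fun i => μ (P i)) i := by
    by_cases hi : i ∈ s
    · simpa [C', hi] using (hPC i).le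
    · simp only [C', if_neg hi, ← bot_eq_empty, symmDiff_bot]
      simp [hi]
  refine ⟨n, ⋃ i, P i ∆ C' i, .iUnion fun i => (hP.1 i).symmDiff (hle n _ (hC' i)), ?_,
    fun i => ⟨C' i, hC' i,
      diff_eq_diff_of_symmDiff_subset (subset_iUnion (fun i => P i ∆ C' i) i)⟩⟩
  calc μ (⋃ i, P i ∆ C' i) ≤ ∑' i, μ (P i ∆ C' i) := measure_iUnion_le _
    _ ≤ ∑' i, (e i + {i | i ∉ s}.indicator (fun i => μ (P i)) i) := ENNReal.tsum_le_tsum hPC'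
    _ = ∑' i, e i + ∑' i : {i // i ∉ s}, μ (P i) := by
        rw [ENNReal.tsum_add, ← tsum_subtype]
        rfl
    _ < δ / 2 + δ / 2 := ENNReal.add_lt_add he_sum hs
    _ = δ := ENNReal.add_halves δ

lemma measurableSet_sup_generateFrom_restrictPartition {C D : Set X} (hC : MeasurableSet[m] C)
    {i : ℕ} (hPC : P i \ D = C \ D) :
    MeasurableSet[m ⊔ MeasurableSpace.generateFrom (range (restrictPartition D P))] (P i) := by
  have hcell (j) : MeasurableSet[m ⊔ .generateFrom (range (restrictPartition D P))]
      (restrictPartition D P j) :=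
    (le_sup_right : _ ≤ m ⊔ _) _ (MeasurableSpace.measurableSet_generateFrom (mem_range_self j))
  rw [← inter_union_sdiff (P i) D, hPC]
  exact (hcell (i + 1)).union (((le_sup_left : m ≤ m ⊔ _) C hC).inter (hcell 0))

lemma IsPartition.exists_condEnt_lt_measurableSet_sup_generateFrom [StandardBorelSpace X]
    [IsFiniteMeasure μ] [Nonempty ι] (hP : IsPartition P) (hK : Directed (· ≤ ·) K)
    (hle : ∀ n, K n ≤ mX) (hgen : SubsetMod (⨆ n, K n) μ (range P)) (hm : m ≤ mX)
    (hfin : condEnt m μ P ≠ ⊤) {ε : ℝ≥0∞} (hε : ε ≠ 0) :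
    ∃ n, ∃ β : ℕ → Set X, IsPartition β ∧ condEnt m μ β < ε ∧
      ∀ i, MeasurableSet[K n ⊔ MeasurableSpace.generateFrom (range β)] (P i) := by
  have hpow (j : ℕ) : ((2 : ℝ≥0∞)⁻¹) ^ j ≠ 0 := pow_ne_zero j (by simp)
  choose n D hD hD_lt hPD using fun j => hP.exists_diff_eq_diff hK hle hgen (hpow j)
  have hsum : ∑' j, μ (D j) ≠ ⊤ :=
    ne_top_of_le_ne_top (by simp [ENNReal.tsum_geometric])
      (ENNReal.tsum_le_tsum fun j => (hD_lt j).le)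
  obtain ⟨j, hj⟩ :=
    ((tendsto_condEnt_restrict hm hP hfin hD hsum).eventually_lt_const hε.bot_lt).exists
  refine ⟨n j, restrictPartition (D j) P, hP.restrict (hD j), hj, fun i => ?_⟩
  obtain ⟨C, hC, hPC⟩ := hPD j i
  exact measurableSet_sup_generateFrom_restrictPartition hC hPC

end Approximation

section InvariantAlgebra

variable {G X : Type*} [Group G] [MulAction G X] {F F' : MeasurableSpace X} {ξ : Set (Set X)}

lemma invariantAlg_iff_le_map :
    InvariantAlg G F ↔ ∀ g : G, F ≤ F.map (fun x => g • x) := Iff.rfl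

lemma InvariantAlg.sup (hF : InvariantAlg G F) (hF' : InvariantAlg G F') :
    InvariantAlg G (F ⊔ F') :=
  invariantAlg_iff_le_map.2 fun g =>
    sup_le ((invariantAlg_iff_le_map.1 hF g).trans (MeasurableSpace.map_mono le_sup_left))
      ((invariantAlg_iff_le_map.1 hF' g).trans (MeasurableSpace.map_mono le_sup_right))

lemma InvariantAlg.iSup {ι : Type*} {F : ι → MeasurableSpace X}
    (hF : ∀ n, InvariantAlg G (F n)) : InvariantAlg G (⨆ n, F n) :=
  invariantAlg_iff_le_map.2 fun g => iSup_le fun n =>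
    (invariantAlg_iff_le_map.1 (hF n) g).trans (MeasurableSpace.map_mono (le_iSup F n))

lemma invariantAlg_sigmaG (ξ : Set (Set X)) : InvariantAlg G (sigmaG G ξ) := by
  refine invariantAlg_iff_le_map.2 fun g => MeasurableSpace.generateFrom_le ?_
  rintro _ ⟨h, A, hA, rfl⟩
  refine MeasurableSpace.measurableSet_generateFrom ⟨h * g, A, hA, ?_⟩
  simp only [← preimage_comp, comp_def, mul_smul]

lemma sigmaG_le (hF : InvariantAlg G F) (hξ : ∀ A ∈ ξ, MeasurableSet[F] A) :
    sigmaG G ξ ≤ F :=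
  MeasurableSpace.generateFrom_le fun _ ⟨g, A, hA, hB⟩ => hB ▸ hF g A (hξ A hA)

lemma generateFrom_le_sigmaG (ξ : Set (Set X)) :
    MeasurableSpace.generateFrom ξ ≤ sigmaG G ξ :=
  MeasurableSpace.generateFrom_mono fun A hA => ⟨1, A, hA, by simp only [one_smul, preimage_id']⟩

lemma sigmaG_mono {ξ' : Set (Set X)} (h : ξ ⊆ ξ') : sigmaG G ξ ≤ sigmaG G ξ' :=
  MeasurableSpace.generateFrom_mono fun _ ⟨g, A, hA, hB⟩ => ⟨g, A, h hA, hB⟩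

lemma sigmaG_iUnion {ι : Type*} (ξ : ι → Set (Set X)) :
    sigmaG G (⋃ n, ξ n) = ⨆ n, sigmaG G (ξ n) := by
  refine le_antisymm (sigmaG_le (.iSup fun n => invariantAlg_sigmaG (ξ n)) fun A hA => ?_)
    (iSup_le fun n => sigmaG_mono (subset_iUnion ξ n))
  obtain ⟨n, hA⟩ := mem_iUnion.1 hA
  exact le_iSup (fun n => sigmaG G (ξ n)) n _
    (generateFrom_le_sigmaG _ _ (MeasurableSpace.measurableSet_generateFrom hA))

lemma iSup_sigmaG_image_Iio (α : ℕ → Set X) :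
    ⨆ n, sigmaG G (α '' Iio n) = sigmaG G (range α) := by
  rw [← sigmaG_iUnion, ← image_iUnion, iUnion_Iio, image_univ]

lemma sigmaG_image_Iio_le_sigmaG_range_coarsen (α : ℕ → Set X) (N : ℕ) :
    sigmaG G (α '' Iio N) ≤ sigmaG G (range (coarsenPartition α (min · N))) := by
  refine sigmaG_mono ?_
  rintro _ ⟨i, hi, rfl⟩
  exact ⟨i, coarsenPartition_min_of_lt α hi⟩

variable [mX : MeasurableSpace X] {μ : Measure X}

lemma invariantAlg_invSigma : InvariantAlg G (invSigma G X) := by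
  refine invariantAlg_iff_le_map.2 fun g => MeasurableSpace.generateFrom_le fun A hA => ?_
  refine MeasurableSpace.measurableSet_generateFrom ?_
  rwa [mem_ofPred_eq, hA.2 g]

lemma invSigma_le : invSigma G X ≤ mX :=
  MeasurableSpace.generateFrom_le fun _ hA => hA.1

lemma InvariantAlg.eventuallyMeasurableSpace (hF : InvariantAlg G F)
    (hqmp : ∀ g : G, Measure.QuasiMeasurePreserving (fun x : X => g • x) μ μ) :
    InvariantAlg G (eventuallyMeasurableSpace F (ae μ)) :=
  fun g _ ⟨B, hB, hAB⟩ => ⟨_, hF g B hB, (hqmp g).preimage_ae_eq hAB⟩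

end InvariantAlgebra

section RokhlinEntropy

variable {G X : Type*} [Group G] [MulAction G X] {F F' : MeasurableSpace X}
  [mX : MeasurableSpace X] {μ : Measure X} {ξ ξ' : Set (Set X)} {P α : ℕ → Set X}

lemma outerRokhlin_le (hα : IsPartition α)
    (hgen : SubsetMod (sigmaG G (range α) ⊔ F ⊔ invSigma G X) μ ξ) :
    outerRokhlin G ξ F μ ≤ condEnt (F ⊔ invSigma G X) μ α :=
  sInf_le ⟨α, hα, hgen, rfl⟩

lemma outerRokhlin_anti [IsFiniteMeasure μ] (hFF' : F ≤ F') (hF' : F' ≤ mX)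
    (ξ : Set (Set X)) : outerRokhlin G ξ F' μ ≤ outerRokhlin G ξ F μ := by
  refine le_sInf ?_
  rintro _ ⟨α, hα, hgen, rfl⟩
  exact (outerRokhlin_le hα (hgen.mono (by gcongr))).trans
    (condEnt_anti (by gcongr) (sup_le hF' invSigma_le) hα.1)

lemma outerRokhlin_mono (hξ : ξ ⊆ ξ') : outerRokhlin G ξ F μ ≤ outerRokhlin G ξ' F μ :=
  sInf_le_sInf fun _ ⟨α, hα, hgen, h⟩ => ⟨α, hα, fun A hA => hgen A (hξ hA), h⟩

lemma rokhlin_eq_outerRokhlin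
    (hqmp : ∀ g : G, Measure.QuasiMeasurePreserving (fun x : X => g • x) μ μ)
    (hFF' : F ≤ F') (hF' : InvariantAlg G F') (hP : ∀ i, MeasurableSet (P i))
    (hgen : SubsetMod (sigmaG G (range P) ⊔ F ⊔ invSigma G X) μ {A | MeasurableSet A}) :
    rokhlin G F' μ = outerRokhlin G (range P) F' μ := by
  refine le_antisymm (le_sInf ?_) (outerRokhlin_mono (range_subset_iff.2 hP))
  rintro _ ⟨α, hα, hPα, rfl⟩
  refine outerRokhlin_le hα (hgen.trans ?_)
  have hinv := (((invariantAlg_sigmaG (range α)).sup hF').sup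
    invariantAlg_invSigma).eventuallyMeasurableSpace hqmp
  refine sup_le (sup_le (sigmaG_le hinv (subsetMod_iff.1 hPα)) ?_) ?_
  · exact (hFF'.trans (le_sup_right.trans le_sup_left)).trans le_eventuallyMeasurableSpace
  · exact le_sup_right.trans le_eventuallyMeasurableSpace

lemma IsPartition.sigmaG_sup_generateFrom_le_sigmaG_join {Q B : ℕ → Set X}
    (hQ : IsPartition Q) (hB : IsPartition B) :
    sigmaG G (range Q) ⊔ MeasurableSpace.generateFrom (range B) ≤
      sigmaG G (range (joinPartition Q B)) := by
  have hle : MeasurableSpace.generateFrom (range Q) ⊔ MeasurableSpace.generateFrom (range B) ≤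
      sigmaG G (range (joinPartition Q B)) :=
    (hQ.generateFrom_sup_le_generateFrom_join hB).trans (generateFrom_le_sigmaG _)
  refine sup_le (sigmaG_le (invariantAlg_sigmaG _) fun A hA => ?_) (le_sup_right.trans hle)
  exact le_sup_left.trans hle A (MeasurableSpace.measurableSet_generateFrom hA)

variable [StandardBorelSpace X] [IsFiniteMeasure μ]

lemma exists_outerRokhlin_le_condEnt_add {F : ℕ → MeasurableSpace X} (hmX : InvariantAlg G mX)
    (hmono : Monotone F) (hle : ∀ n, F n ≤ mX) (hP : IsPartition P) {k : ℕ}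
    (hP_fin : condEnt (F k ⊔ invSigma G X) μ P ≠ ⊤) (hα : IsPartition α)
    (hgen : SubsetMod (sigmaG G (range α) ⊔ (⨆ n, F n) ⊔ invSigma G X) μ (range P))
    (hα_fin : condEnt ((⨆ n, F n) ⊔ invSigma G X) μ α ≠ ⊤) {ε : ℝ≥0∞} (hε : ε ≠ 0) :
    ∃ n, outerRokhlin G (range P) (F n) μ ≤ condEnt ((⨆ n, F n) ⊔ invSigma G X) μ α + ε := by
  have hε_half : ε / 2 ≠ 0 := (ENNReal.half_pos hε).ne'
  let ℱ : Filtration ℕ mX :=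
    ⟨fun n => F n ⊔ invSigma G X, fun _ _ h => sup_le_sup_right (hmono h) _,
      fun n => sup_le (hle n) invSigma_le⟩
  have hℱ : ⨆ n, ℱ n = (⨆ n, F n) ⊔ invSigma G X := iSup_sup.symm
  rw [← hℱ] at hα_fin ⊢
  let K (n : ℕ) : MeasurableSpace X := sigmaG G (α '' Iio n) ⊔ ℱ n
  have hK_mono : Monotone K := fun i j hij =>
    sup_le_sup (sigmaG_mono (image_mono (Iio_subset_Iio hij))) (ℱ.mono hij)
  have hK_le (n) : K n ≤ mX :=
    sup_le (sigmaG_le hmX (forall_mem_image.2 fun i _ => hα.1 i)) (ℱ.le n)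
  have hK_iSup : ⨆ n, K n = sigmaG G (range α) ⊔ (⨆ n, F n) ⊔ invSigma G X := by
    rw [iSup_sup_eq, iSup_sigmaG_image_Iio, hℱ, sup_assoc]
  obtain ⟨N, β, hβ, hβ_lt, hPβ⟩ := hP.exists_condEnt_lt_measurableSet_sup_generateFrom
    hK_mono.directed_le hK_le (hK_iSup ▸ hgen) (ℱ.le k) hP_fin hε_half
  obtain ⟨n, hn_lt, hn⟩ := ((eventually_condEnt_coarsen_lt ℱ hα hα_fin N hε_half).and
    (eventually_ge_atTop (max N k))).exists
  have hQ : IsPartition (coarsenPartition α (min · N)) := hα.coarsen _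
  have hγ_gen : K N ⊔ MeasurableSpace.generateFrom (range β) ≤
      sigmaG G (range (joinPartition (coarsenPartition α (min · N)) β)) ⊔ ℱ n := by
    have hjoin := hQ.sigmaG_sup_generateFrom_le_sigmaG_join (G := G) hβ
    refine sup_le (sup_le_sup ?_ (ℱ.mono (le_of_max_le_left hn)))
      ((le_sup_right.trans hjoin).trans le_sup_left)
    exact (sigmaG_image_Iio_le_sigmaG_range_coarsen α N).trans (le_sup_left.trans hjoin)
  refine ⟨n, (outerRokhlin_le (hQ.join hβ) ?_).trans ?_⟩
  · rintro _ ⟨i, rfl⟩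
    refine ⟨P i, ?_, by simp only [symmDiff_self, bot_eq_empty, measure_empty]⟩
    rw [sup_assoc]
    exact hγ_gen _ (hPβ i)
  calc condEnt (ℱ n) μ (joinPartition (coarsenPartition α (min · N)) β)
      ≤ condEnt (ℱ n) μ (coarsenPartition α (min · N)) + condEnt (ℱ n) μ β :=
        condEnt_join_le (ℱ.le n) hQ hβ
    _ ≤ (condEnt (⨆ n, ℱ n) μ α + ε / 2) + ε / 2 :=
        add_le_add hn_lt.le <|
          (condEnt_anti (ℱ.mono (le_of_max_le_right hn)) (ℱ.le n) hβ.1).trans hβ_lt.le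
    _ = condEnt (⨆ n, ℱ n) μ α + ε := by rw [add_assoc, ENNReal.add_halves]

variable {F : ℕ → MeasurableSpace X}

lemma outerRokhlin_iSup (hmX : InvariantAlg G mX) (hmono : Monotone F) (hle : ∀ n, F n ≤ mX)
    (hP : IsPartition P) (hfin : (⨅ n, condEnt (F n ⊔ invSigma G X) μ P) < ⊤) :
    outerRokhlin G (range P) (⨆ n, F n) μ = ⨅ n, outerRokhlin G (range P) (F n) μ := by
  refine le_antisymm (le_iInf fun n => outerRokhlin_anti (le_iSup F n) (iSup_le hle) _)
    (le_sInf ?_)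
  rintro _ ⟨α, hα, hgen, rfl⟩
  obtain ⟨k, hk⟩ := iInf_lt_iff.1 hfin
  refine ENNReal.le_of_forall_pos_le_add fun ε hε hα_fin => ?_
  obtain ⟨n, hn⟩ := exists_outerRokhlin_le_condEnt_add hmX hmono hle hP hk.ne hα hgen
    hα_fin.ne (ENNReal.coe_ne_zero.2 hε.ne')
  exact (iInf_le _ n).trans hn

lemma rokhlin_iSup (hqmp : ∀ g : G, Measure.QuasiMeasurePreserving (fun x : X => g • x) μ μ)
    (hmono : Monotone F) (hle : ∀ n, F n ≤ mX) (hinv : ∀ n, InvariantAlg G (F n))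
    (hfin : (⨅ n, rokhlin G (F n) μ) < ⊤) :
    rokhlin G (⨆ n, F n) μ = ⨅ n, rokhlin G (F n) μ := by
  obtain ⟨k, hk⟩ := iInf_lt_iff.1 hfin
  obtain ⟨_, ⟨P, hP, hgen, rfl⟩, hP_fin⟩ := sInf_lt_iff.1 hk
  have hP_inf : (⨅ n, condEnt (F n ⊔ invSigma G X) μ P) < ⊤ := iInf_lt_iff.2 ⟨k, hP_fin⟩
  have hmX : InvariantAlg G mX := fun g _ hA => (hqmp g).measurable hA
  have hanti : Antitone fun n => outerRokhlin G (range P) (F n) μ :=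
    fun _ j hij => outerRokhlin_anti (hmono hij) (hle j) _
  have hanti' : Antitone fun n => rokhlin G (F n) μ :=
    fun _ j hij => outerRokhlin_anti (hmono hij) (hle j) _
  calc rokhlin G (⨆ n, F n) μ = outerRokhlin G (range P) (⨆ n, F n) μ :=
        rokhlin_eq_outerRokhlin hqmp (le_iSup F k) (.iSup hinv) hP.1 hgen
    _ = ⨅ n, outerRokhlin G (range P) (F n) μ := outerRokhlin_iSup hmX hmono hle hP hP_inf
    _ = ⨅ n, outerRokhlin G (range P) (F (n + k)) μ := (hanti.iInf_nat_add k).symm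
    _ = ⨅ n, rokhlin G (F (n + k)) μ := iInf_congr fun n =>
        (rokhlin_eq_outerRokhlin hqmp (hmono (Nat.le_add_left k n)) (hinv _) hP.1 hgen).symm
    _ = ⨅ n, rokhlin G (F n) μ := hanti'.iInf_nat_add k

end RokhlinEntropy

theorem statement16_general {G X : Type*} [Group G] [mX : MeasurableSpace X]
    [StandardBorelSpace X] [MulAction G X] (μ : Measure X) [IsFiniteMeasure μ]
    (hqmp : ∀ g : G, Measure.QuasiMeasurePreserving (fun x : X => g • x) μ μ)
    (F : ℕ → MeasurableSpace X) (hmono : Monotone F) (hle : ∀ n, F n ≤ mX) :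
    (∀ P : ℕ → Set X, IsPartition P →
        (⨅ n, condEnt (F n ⊔ invSigma G X) μ P) < ⊤ →
        outerRokhlin G (range P) (⨆ n, F n) μ = ⨅ n, outerRokhlin G (range P) (F n) μ) ∧
      ((∀ n, InvariantAlg G (F n)) → (⨅ n, rokhlin G (F n) μ) < ⊤ →
        rokhlin G (⨆ n, F n) μ = ⨅ n, rokhlin G (F n) μ) :=
  ⟨fun _ => outerRokhlin_iSup (fun g _ hA => (hqmp g).measurable hA) hmono hle,
    rokhlin_iSup hqmp hmono hle⟩

/-- Corollary 6.2: relative Rokhlin entropy over an increasing union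
of invariant sub-σ-algebras is the infimum of the relative entropies, both for the outer
Rokhlin entropy of a partition of finite conditional entropy and for the Rokhlin entropy
of the action. -/
theorem statement16 {G X : Type*} [Group G] [Countable G]
    [mX : MeasurableSpace X] [StandardBorelSpace X] [MulAction G X]
    (μ : Measure X) [IsProbabilityMeasure μ] (hpmp : IsPmp G μ)
    (F : ℕ → MeasurableSpace X) (hmono : Monotone F) (hle : ∀ n, F n ≤ mX)
    (hinv : ∀ n, InvariantAlg G (F n)) :
    (∀ P : ℕ → Set X, IsPartition P →
        (⨅ n, condEnt (F n ⊔ invSigma G X) μ P) < ⊤ →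
        outerRokhlin G (Set.range P) (⨆ n, F n) μ =
          ⨅ n, outerRokhlin G (Set.range P) (F n) μ) ∧
      ((⨅ n, rokhlin G (F n) μ) < ⊤ →
        rokhlin G (⨆ n, F n) μ = ⨅ n, rokhlin G (F n) μ) := by
  exact (statement16_general μ (fun g => (hpmp g).quasiMeasurePreserving) F hmono hle).imp_right
    (· hinv)
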